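/- Let n ≥ 3, p ∈ (n, n + 1/(n−2)), and define f:B^n→B^n (B^n the open unit ball in ℝ^n) by f(x) = (x/|x|)·(1 + (p−n)∫_{|x|}^1 dt/(t^{p−n+1}(ln(e/t))^{(p−n+1)/(n−1)}))^{−1/(p−n)} for x ≠ 0 and f(0) = 0. Then for every x ∈ B^n∖{0} the distortion satisfies K_p(x,f) = (ln(e/|x|))^{(p−n+1)/(n−1)}. -/

import Mathlib

open MeasureTheory Metric Set Filter
open scoped ENNReal NNReal Topology RealInnerProductSpace Classical

noncomputable section

abbrev Eucl (n : ℕ) : Type := EuclideanSpace ℝ (Fin n)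

/-- A `k`-dimensional surface in `ℝⁿ`: a continuous map defined on an open subset of the
one-point compactification of `ℝᵏ`. -/
structure Surface (n k : ℕ) where
  dom : Set (OnePoint (Eucl k))
  isOpen_dom : IsOpen dom
  toFun : OnePoint (Eucl k) → Eucl n
  continuousOn : ContinuousOn toFun dom

namespace Surface

variable {n k : ℕ}

/-- The multiplicity function `N(S,y)` of a surface. -/
def mult (S : Surface n k) (y : Eucl n) : ℝ≥0∞ :=
  ((S.dom ∩ S.toFun ⁻¹' {y}).encard : ℕ∞)

/-- The integral `∫_S ρ dA = ∫ ρ(y) N(S,y) dH^k(y)` of `ρ` over the surface `S`. -/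
def sint (S : Surface n k) (ρ : Eucl n → ℝ≥0∞) : ℝ≥0∞ :=
  ∫⁻ y, ρ y * S.mult y ∂(μH[(k : ℝ)] : Measure (Eucl n))

end Surface

/-- Admissible functions for a family of `k`-surfaces. -/
def surfAdm {n : ℕ} (k : ℕ) (Γ : Set (Surface n k)) : Set (Eucl n → ℝ≥0∞) :=
  {ρ | Measurable ρ ∧ ∀ S ∈ Γ, 1 ≤ S.sint fun y => ρ y ^ k}

/-- The `p`-modulus of a family of `k`-surfaces. -/
def surfModulus {n : ℕ} (p : ℝ) (k : ℕ) (Γ : Set (Surface n k)) : ℝ≥0∞ :=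
  ⨅ ρ ∈ surfAdm k Γ, ∫⁻ x, ρ x ^ p

/-- Extensively `p`-admissible functions: admissibility may fail on a subfamily of
`p`-modulus zero. -/
def extAdm {n : ℕ} (p : ℝ) (k : ℕ) (Γ : Set (Surface n k)) : Set (Eucl n → ℝ≥0∞) :=
  {ρ | Measurable ρ ∧ surfModulus p k {S ∈ Γ | ¬ 1 ≤ S.sint fun y => ρ y ^ k} = 0}

/-- The family of the (injectively parametrized, nonempty) surfaces `S(x₀,r) ∩ D`,
`r ∈ I`. -/
def sphereFam {n : ℕ} (D : Set (Eucl n)) (x₀ : Eucl n) (I : Set ℝ) :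
    Set (Surface n (n - 1)) :=
  {S | ∃ r ∈ I, S.dom.Nonempty ∧ Set.InjOn S.toFun S.dom ∧
      S.toFun '' S.dom = sphere x₀ r ∩ D}

/-- The image of a family of surfaces under a map `f`. -/
def imageFam {n k : ℕ} (f : Eucl n → Eucl n) (Γ : Set (Surface n k)) :
    Set (Surface n k) :=
  {S' | ∃ S ∈ Γ, S'.dom = S.dom ∧ Set.EqOn S'.toFun (f ∘ S.toFun) S.dom}

/-- The spherical ring `R(x₀,a,b)`. -/
def ringA {n : ℕ} (x₀ : Eucl n) (a b : ℝ) : Set (Eucl n) :=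
  {x | a < dist x x₀ ∧ dist x x₀ < b}

/-- `‖Q‖_α(r) = (∫_{D ∩ S(x₀,r)} Q^α dA)^{1/α}`. -/
def sphNorm {n : ℕ} (D : Set (Eucl n)) (x₀ : Eucl n) (Q : Eucl n → ℝ≥0∞)
    (α : ℝ) (r : ℝ) : ℝ≥0∞ :=
  (∫⁻ x in D ∩ sphere x₀ r, Q x ^ α ∂(μH[((n : ℝ) - 1)] : Measure (Eucl n))) ^ (1 / α)

/-- `f` is a lower `Q`-homeomorphism w.r.t. the `p`-modulus at `x₀`. -/
def IsLowerQHomeoAt {n : ℕ} (D : Set (Eucl n)) (f : Eucl n → Eucl n)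
    (Q : Eucl n → ℝ≥0∞) (p : ℝ) (x₀ : Eucl n) (d₀ : ℝ≥0∞) : Prop :=
  ∀ ε ε₀ : ℝ, 0 < ε → ε < ε₀ → ENNReal.ofReal ε₀ < d₀ →
    (⨅ ρ ∈ extAdm p (n - 1) (sphereFam D x₀ (Ioo ε ε₀)),
        ∫⁻ x in ringA x₀ ε ε₀, ρ x ^ p / Q x) ≤
      surfModulus p (n - 1) (imageFam f (sphereFam D x₀ (Ioo ε ε₀)))

/-- `f` is a homeomorphism of `D` onto `D'`. -/
structure IsHomeoOn {n : ℕ} (f : Eucl n → Eucl n) (D D' : Set (Eucl n)) : Prop where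
  continuousOn : ContinuousOn f D
  injOn : Set.InjOn f D
  image_eq : f '' D = D'
  isOpenMapOn : ∀ U : Set (Eucl n), U ⊆ D → IsOpen U → IsOpen (f '' U)

/-- `Df` is the weak (Sobolev) derivative of `f` on `D`, and `f ∈ W^{1,1}_loc(D)`. -/
def IsWeakDerivOn {n m : ℕ} (D : Set (Eucl n)) (f : Eucl n → Eucl m)
    (Df : Eucl n → Eucl n →L[ℝ] Eucl m) : Prop :=
  LocallyIntegrableOn f D volume ∧ LocallyIntegrableOn Df D volume ∧
  ∀ ψ : Eucl n → ℝ, ContDiff ℝ (⊤ : ℕ∞) ψ → HasCompactSupport ψ → tsupport ψ ⊆ D →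
    ∀ v : Eucl n, ∫ x, ψ x • Df x v = - ∫ x, fderiv ℝ ψ x v • f x

/-- The Frobenius norm `|∇f| = (Σ_{i,j} (∂f_i/∂x_j)²)^{1/2}` of a linear map. -/
def frobNorm {n m : ℕ} (A : Eucl n →L[ℝ] Eucl m) : ℝ :=
  Real.sqrt (∑ i : Fin m, ∑ j : Fin n, (A (EuclideanSpace.single j 1) i) ^ 2)

/-- The Orlicz–Sobolev class `W^{1,φ}_loc(D)` (with explicit weak derivative `Df`). -/
def MemOrliczSobolevOn {n m : ℕ} (φ : ℝ → ℝ) (D : Set (Eucl n))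
    (f : Eucl n → Eucl m) (Df : Eucl n → Eucl n →L[ℝ] Eucl m) : Prop :=
  IsWeakDerivOn D f Df ∧
  ∀ K : Set (Eucl n), K ⊆ D → IsCompact K →
    (∫⁻ x in K, ENNReal.ofReal (φ (frobNorm (Df x)))) < ⊤

/-- `φ` is nondecreasing and positive on `(0,∞)`. -/
def NondecPos (φ : ℝ → ℝ) : Prop :=
  (∀ s t : ℝ, 0 < s → s ≤ t → φ s ≤ φ t) ∧ ∀ t : ℝ, 0 < t → 0 < φ t

/-- The Calderón-type condition `∫_{t₀}^∞ (t/φ(t))^{1/(n-2)} dt < ∞`. -/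
def CalderonCond (n : ℕ) (φ : ℝ → ℝ) : Prop :=
  ∃ t₀ : ℝ, 0 < t₀ ∧
    IntegrableOn (fun t => (t / φ t) ^ (1 / ((n : ℝ) - 2))) (Ioi t₀) volume

/-- `f` (with a.e. derivative `Df`) has finite distortion on `D`. -/
def HasFiniteDistortionOn {n : ℕ} (D : Set (Eucl n))
    (Df : Eucl n → Eucl n →L[ℝ] Eucl n) : Prop :=
  ∃ K : Eucl n → ℝ, AEMeasurable K (volume.restrict D) ∧
    ∀ᵐ x ∂volume.restrict D, 1 ≤ K x ∧ ‖Df x‖ ^ n ≤ K x * (Df x).det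

/-- The distortion `K_p(x,f)` for a map with derivative `Df`. -/
def distortionKp {n : ℕ} (p : ℝ) (Df : Eucl n → Eucl n →L[ℝ] Eucl n)
    (x : Eucl n) : ℝ≥0∞ :=
  if (Df x).det ≠ 0 then ENNReal.ofReal (‖Df x‖ ^ p / (Df x).det)
  else if Df x = 0 then 1 else ⊤

/-- The multiplicity function of a curve `γ : [0,1] → ℝⁿ`. -/
def curveMult {n : ℕ} (γ : ℝ → Eucl n) (y : Eucl n) : ℝ≥0∞ :=
  (({t ∈ Icc (0:ℝ) 1 | γ t = y}).encard : ℕ∞)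

/-- The line integral `∫_γ ρ ds = ∫ ρ(y) N(γ,y) dH¹(y)`. -/
def curveInt {n : ℕ} (γ : ℝ → Eucl n) (ρ : Eucl n → ℝ≥0∞) : ℝ≥0∞ :=
  ∫⁻ y, ρ y * curveMult γ y ∂(μH[(1 : ℝ)] : Measure (Eucl n))

/-- The family of curves joining `A` and `B` in `G`. -/
def curveJoin {n : ℕ} (A B G : Set (Eucl n)) : Set (ℝ → Eucl n) :=
  {γ | ContinuousOn γ (Icc 0 1) ∧ γ 0 ∈ A ∧ γ 1 ∈ B ∧ Set.MapsTo γ (Icc 0 1) G}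

/-- The `q`-modulus of a family of curves. -/
def curveModulus {n : ℕ} (q : ℝ) (Γ : Set (ℝ → Eucl n)) : ℝ≥0∞ :=
  ⨅ ρ ∈ {ρ : Eucl n → ℝ≥0∞ | Measurable ρ ∧ ∀ γ ∈ Γ, 1 ≤ curveInt γ ρ},
    ∫⁻ x, ρ x ^ q

/-- The `q`-capacity of the condenser `(A,C)`, via the modulus of joining curves. -/
def condenserCap {n : ℕ} (q : ℝ) (A C : Set (Eucl n)) : ℝ≥0∞ :=
  curveModulus q (curveJoin (frontier A) (frontier C) (A \ C))

/-- `L(x₀,f) = limsup_{x→x₀} |f(x)-f(x₀)|/|x-x₀|`. -/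
def LAt {n : ℕ} (f : Eucl n → Eucl n) (x₀ : Eucl n) : ℝ≥0∞ :=
  limsup (fun x => edist (f x) (f x₀) / edist x x₀) (𝓝[≠] x₀)

/-- `k_p(x₀) = limsup_{ε→0} (⨍_{B(x₀,ε)} K_p(x,f)^{(n-1)/(p-n+1)} dm)^{(p-n+1)/(n-1)}`. -/
def kpAt {n : ℕ} (p : ℝ) (Df : Eucl n → Eucl n →L[ℝ] Eucl n) (x₀ : Eucl n) : ℝ≥0∞ :=
  limsup (fun ε : ℝ =>
      ((∫⁻ x in ball x₀ ε, distortionKp p Df x ^ (((n:ℝ)-1)/(p-(n:ℝ)+1))) /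
        volume (ball x₀ ε)) ^ ((p-(n:ℝ)+1)/((n:ℝ)-1)))
    (𝓝[>] (0:ℝ))

/-- `f` is absolutely continuous on `S` w.r.t. `d`-dimensional Hausdorff measure. -/
def ACOnSet {n m : ℕ} (f : Eucl n → Eucl m) (S : Set (Eucl n)) (d : ℝ) : Prop :=
  ∀ ε : ℝ, 0 < ε → ∃ δ : ℝ, 0 < δ ∧ ∀ A : Set (Eucl n), A ⊆ S →
    (μH[d] : Measure (Eucl n)) A < ENNReal.ofReal δ →
      (μH[d] : Measure (Eucl m)) (f '' A) < ENNReal.ofReal ε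

/-- `f` is locally absolutely continuous on `S` w.r.t. `H^d`. -/
def LocACOnSet {n m : ℕ} (f : Eucl n → Eucl m) (S : Set (Eucl n)) (d : ℝ) : Prop :=
  ∀ x ∈ S, ∃ V ∈ 𝓝 x, ACOnSet f (S ∩ V) d

/-- The Luzin (N)-property of `f` on `S` w.r.t. `d`-dimensional Hausdorff measure. -/
def LusinNOn {n m : ℕ} (f : Eucl n → Eucl m) (S : Set (Eucl n)) (d : ℝ) : Prop :=
  ∀ A : Set (Eucl n), A ⊆ S → (μH[d] : Measure (Eucl n)) A = 0 →
    (μH[d] : Measure (Eucl m)) (f '' A) = 0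

end

/-- The radial profile `g(r)` of the example mapping. -/
noncomputable def gfun (n : ℕ) (p : ℝ) (r : ℝ) : ℝ :=
  (1 + (p - (n:ℝ)) * ∫ t in r..(1:ℝ),
      1 / (t ^ (p - (n:ℝ) + 1) *
        Real.log (Real.exp 1 / t) ^ ((p - (n:ℝ) + 1) / ((n:ℝ) - 1)))) ^ (-(1 / (p - (n:ℝ))))

/-- The example radial homeomorphism `f(x) = (x/|x|) g(|x|)`, `f(0) = 0`. -/
noncomputable def fmap (n : ℕ) (p : ℝ) (x : Eucl n) : Eucl n :=
  if x = 0 then 0 else (gfun n p ‖x‖ / ‖x‖) • x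

/-! In polar coordinates the derivative of a radial map `y ↦ g(|y|) y/|y|` is diagonal: it scales
the radial line by `g'(r)` and its orthogonal complement by `g(r)/r`.  For `p > n` the profile
`G = (1 + a ∫_r^1 dt/(t^(a+1) w(t)))^(-1/a)`, `a = p - n`, solves `G' = (G/r)^(a+1)/w(r)`, so the
formula `K_p = (G/r)^(p-n+1)/G'` collapses to `K_p = w(r)` as soon as the tangential dilatation is
the larger one.  That comparison reads `(G/r)^a ≤ w(r)`, and it holds for every weight `w ≥ 1`
decreasing on `(0,1]`, because then `w(r) G^(-a) ≥ 1 + a ∫_r^1 dt/t^(a+1) = r^(-a)`. -/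

section OrthogonalScaling

variable {𝕜 E : Type*} [RCLike 𝕜] [NormedAddCommGroup E] [InnerProductSpace 𝕜 E]
  (K : Submodule 𝕜 E) (a b : 𝕜)

/-- The linear map acting as multiplication by `a` on the subspace `K` and by `b` on `Kᗮ`. The
derivative of a radial map has this form, with `K` the radial line. -/
noncomputable def orthogonalScaling [K.HasOrthogonalProjection] : E →L[𝕜] E :=
  a • K.starProjection + b • Kᗮ.starProjection

variable {K}

theorem orthogonalScaling_apply_of_mem [K.HasOrthogonalProjection] {v : E} (hv : v ∈ K) :
    orthogonalScaling K a b v = a • v := by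
  simp [orthogonalScaling, Submodule.starProjection_eq_self_iff.2 hv,
    K.starProjection_orthogonal_apply_eq_zero hv]

theorem orthogonalScaling_apply_of_mem_orthogonal [K.HasOrthogonalProjection] {v : E}
    (hv : v ∈ Kᗮ) : orthogonalScaling K a b v = b • v := by
  simp [orthogonalScaling, Submodule.starProjection_eq_self_iff.2 hv,
    K.starProjection_apply_eq_zero_iff.2 hv]

variable (K)

theorem norm_sq_orthogonalScaling_apply [K.HasOrthogonalProjection] (v : E) :
    ‖orthogonalScaling K a b v‖ ^ 2 =
      ‖a‖ ^ 2 * ‖K.starProjection v‖ ^ 2 + ‖b‖ ^ 2 * ‖Kᗮ.starProjection v‖ ^ 2 := by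
  have horth : inner 𝕜 (a • K.starProjection v) (b • Kᗮ.starProjection v) = 0 :=
    Submodule.inner_right_of_mem_orthogonal (K.smul_mem a (K.starProjection_apply_mem v))
      (Kᗮ.smul_mem b (Kᗮ.starProjection_apply_mem v))
  simpa only [orthogonalScaling, add_apply, smul_apply,
      ← sq, norm_smul, mul_pow] using
    norm_add_sq_eq_norm_sq_add_norm_sq_of_inner_eq_zero _ _ horth

theorem norm_orthogonalScaling_apply_le [K.HasOrthogonalProjection] (v : E) :
    ‖orthogonalScaling K a b v‖ ≤ max ‖a‖ ‖b‖ * ‖v‖ := by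
  refine le_of_sq_le_sq ?_ (by positivity)
  calc ‖orthogonalScaling K a b v‖ ^ 2
      = ‖a‖ ^ 2 * ‖K.starProjection v‖ ^ 2 + ‖b‖ ^ 2 * ‖Kᗮ.starProjection v‖ ^ 2 :=
        norm_sq_orthogonalScaling_apply K a b v
    _ ≤ max ‖a‖ ‖b‖ ^ 2 * ‖K.starProjection v‖ ^ 2 +
          max ‖a‖ ‖b‖ ^ 2 * ‖Kᗮ.starProjection v‖ ^ 2 := by
        gcongr
        · exact le_max_left _ _
        · exact le_max_right _ _
    _ = (max ‖a‖ ‖b‖ * ‖v‖) ^ 2 := by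
        rw [← mul_add, ← K.norm_sq_eq_add_norm_sq_starProjection, mul_pow]

theorem norm_orthogonalScaling [K.HasOrthogonalProjection] (hbot : K ≠ ⊥) (htop : K ≠ ⊤) :
    ‖orthogonalScaling K a b‖ = max ‖a‖ ‖b‖ := by
  refine ContinuousLinearMap.opNorm_eq_of_bounds (by positivity)
    (norm_orthogonalScaling_apply_le K a b) fun N _ hN => max_le ?_ ?_
  · obtain ⟨v, hv, hv0⟩ := K.exists_mem_ne_zero_of_ne_bot hbot
    have h := hN v
    rw [orthogonalScaling_apply_of_mem a b hv, norm_smul] at h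
    exact le_of_mul_le_mul_right h (norm_pos_iff.2 hv0)
  · obtain ⟨v, hv, hv0⟩ :=
      Kᗮ.exists_mem_ne_zero_of_ne_bot (mt K.orthogonal_eq_bot_iff.1 htop)
    have h := hN v
    rw [orthogonalScaling_apply_of_mem_orthogonal a b hv, norm_smul] at h
    exact le_of_mul_le_mul_right h (norm_pos_iff.2 hv0)

theorem det_orthogonalScaling [FiniteDimensional 𝕜 E] :
    (orthogonalScaling K a b).det =
      a ^ Module.finrank 𝕜 K * b ^ Module.finrank 𝕜 Kᗮ := by
  let e := K.prodEquivOfIsCompl Kᗮ K.isCompl_orthogonal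
  have hconj : (orthogonalScaling K a b : E →ₗ[𝕜] E) =
      e.toLinearMap ∘ₗ LinearMap.prodMap (a • LinearMap.id) (b • LinearMap.id) ∘ₗ
        e.symm.toLinearMap := by
    rw [← LinearMap.comp_assoc, LinearEquiv.eq_comp_toLinearMap_symm]
    ext v
    · simp [e, orthogonalScaling_apply_of_mem a b v.2]
    · simp [e, orthogonalScaling_apply_of_mem_orthogonal a b v.2]
  rw [ContinuousLinearMap.det, hconj, LinearMap.det_conj, LinearMap.det_prodMap]
  simp only [LinearMap.det_smul, LinearMap.det_id, mul_one]

end OrthogonalScaling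

section RadialMap

variable {E : Type*} [NormedAddCommGroup E] [InnerProductSpace ℝ E] {x : E}

/-- The radial map `x ↦ (x/|x|) g(|x|)` with profile `g`. Division by zero makes it vanish at the
origin. -/
noncomputable def radialMap (g : ℝ → ℝ) (x : E) : E := (g ‖x‖ / ‖x‖) • x

theorem hasFDerivAt_norm_of_ne_zero (hx : x ≠ 0) :
    HasFDerivAt (fun y : E => ‖y‖) (‖x‖⁻¹ • innerSL ℝ x) x := by
  have h := (hasStrictFDerivAt_norm_sq x).hasFDerivAt.sqrt (by simpa using hx)
  simp only [Real.sqrt_sq (norm_nonneg _)] at h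
  convert! h using 1
  module

theorem hasFDerivAt_radialMap {g : ℝ → ℝ} {g' : ℝ} (hx : x ≠ 0) (hg : HasDerivAt g g' ‖x‖) :
    HasFDerivAt (radialMap g) (orthogonalScaling (ℝ ∙ x) g' (g ‖x‖ / ‖x‖)) x := by
  have hr : ‖x‖ ≠ 0 := norm_ne_zero_iff.2 hx
  have hquot : HasDerivAt (fun r => g r / r) ((g' * ‖x‖ - g ‖x‖ * 1) / ‖x‖ ^ 2) ‖x‖ :=
    hg.div (hasDerivAt_id _) hr
  convert! (hquot.comp_hasFDerivAt x (hasFDerivAt_norm_of_ne_zero hx)).smul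
    (hasFDerivAt_id x) using 1
  ext1 v
  simp only [orthogonalScaling, add_apply, smul_apply,
    Submodule.starProjection_orthogonal_val, Submodule.starProjection_singleton,
    ContinuousLinearMap.smulRight_apply, ContinuousLinearMap.id_apply, coe_innerSL_apply,
    Function.comp_apply, smul_eq_mul, id_eq, Real.ringHom_apply, mul_one]
  match_scalars <;> field_simp
  ring

end RadialMap

theorem distortionKp_fderiv_radialMap {n : ℕ} (hn : 2 ≤ n) {p g' : ℝ} {g : ℝ → ℝ} {x : Eucl n}
    (hx : x ≠ 0) (hg : HasDerivAt g g' ‖x‖) (hg' : 0 < g') (hle : g' ≤ g ‖x‖ / ‖x‖) :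
    distortionKp p (fderiv ℝ (radialMap g)) x =
      ENNReal.ofReal ((g ‖x‖ / ‖x‖) ^ (p - n + 1) / g') := by
  have hT : 0 < g ‖x‖ / ‖x‖ := hg'.trans_le hle
  have hline : Module.finrank ℝ (ℝ ∙ x) = 1 := finrank_span_singleton hx
  have hdim := (ℝ ∙ x).finrank_add_finrank_orthogonal
  rw [hline, finrank_euclideanSpace_fin] at hdim
  have hperp : Module.finrank ℝ (ℝ ∙ x)ᗮ = n - 1 := by omega
  have hdet : (fderiv ℝ (radialMap g) x).det = g' * (g ‖x‖ / ‖x‖) ^ (n - 1) := by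
    rw [(hasFDerivAt_radialMap hx hg).fderiv, det_orthogonalScaling, hline, hperp, pow_one]
  have htop : (ℝ ∙ x) ≠ ⊤ := fun h => by
    rw [h, finrank_top, finrank_euclideanSpace_fin] at hline
    omega
  have hnorm : ‖fderiv ℝ (radialMap g) x‖ = g ‖x‖ / ‖x‖ := by
    rw [(hasFDerivAt_radialMap hx hg).fderiv,
      norm_orthogonalScaling _ _ _ (Submodule.span_singleton_eq_bot.not.2 hx) htop,
      Real.norm_of_nonneg hg'.le, Real.norm_of_nonneg hT.le, max_eq_right hle]
  have hpow : (g ‖x‖ / ‖x‖) ^ p = (g ‖x‖ / ‖x‖) ^ (p - n + 1) * (g ‖x‖ / ‖x‖) ^ (n - 1) := by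
    rw [← Real.rpow_natCast, ← Real.rpow_add hT, Nat.cast_pred (by omega)]
    ring_nf
  rw [distortionKp, hdet, hnorm, if_pos (by positivity), hpow,
    mul_div_mul_right _ _ (by positivity)]

section RadialProfile

/-- The weights for which the radial map with weight `w` has tangential dilatation at least its
radial one on the unit ball. -/
structure IsRadialWeight (w : ℝ → ℝ) : Prop where
  continuousOn : ContinuousOn w (Ioc 0 1)
  antitoneOn : AntitoneOn w (Ioc 0 1)
  one_le_one : 1 ≤ w 1

/-- The quantity `1 + a ∫_r^1 dt/(t^(a+1) w(t))`, which is `G(r)^(-a)` for the profile `G` with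
weight `w`. -/
noncomputable def radialIntegral (a : ℝ) (w : ℝ → ℝ) (r : ℝ) : ℝ :=
  1 + a * ∫ t in r..(1 : ℝ), 1 / (t ^ (a + 1) * w t)

/-- The radial profile `G` with weight `w`: the solution of `G' = (G/r)^(a+1)/w(r)` on `(0,1)`
with `G(1) = 1`. -/
noncomputable def radialProfile (a : ℝ) (w : ℝ → ℝ) (r : ℝ) : ℝ :=
  radialIntegral a w r ^ (-(1 / a))

variable {a r : ℝ} {w : ℝ → ℝ}

theorem IsRadialWeight.one_le (hw : IsRadialWeight w) (hr : r ∈ Ioc (0 : ℝ) 1) : 1 ≤ w r :=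
  hw.one_le_one.trans (hw.antitoneOn hr (right_mem_Ioc.2 zero_lt_one) hr.2)

theorem IsRadialWeight.pos (hw : IsRadialWeight w) (hr : r ∈ Ioc (0 : ℝ) 1) : 0 < w r :=
  zero_lt_one.trans_le (hw.one_le hr)

theorem continuousOn_one_div_rpow_mul (hwc : ContinuousOn w (Ioc 0 1))
    (hw0 : ∀ t ∈ Ioc (0 : ℝ) 1, w t ≠ 0) :
    ContinuousOn (fun t => 1 / (t ^ (a + 1) * w t)) (Ioc 0 1) := by
  have hpow : ContinuousOn (fun t : ℝ => t ^ (a + 1)) (Ioc 0 1) :=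
    continuousOn_id.rpow_const fun t ht => Or.inl ht.1.ne'
  exact continuousOn_const.div (hpow.mul hwc) fun t ht =>
    mul_ne_zero (Real.rpow_pos_of_pos ht.1 _).ne' (hw0 t ht)

theorem intervalIntegrable_one_div_rpow_mul (hwc : ContinuousOn w (Ioc 0 1))
    (hw0 : ∀ t ∈ Ioc (0 : ℝ) 1, w t ≠ 0) (hr : r ∈ Ioc (0 : ℝ) 1) :
    IntervalIntegrable (fun t => 1 / (t ^ (a + 1) * w t)) volume r 1 := by
  refine ContinuousOn.intervalIntegrable_of_Icc hr.2 ?_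
  exact (continuousOn_one_div_rpow_mul hwc hw0).mono fun t ht => ⟨hr.1.trans_le ht.1, ht.2⟩

theorem hasDerivAt_radialIntegral (hwc : ContinuousOn w (Ioc 0 1))
    (hw0 : ∀ t ∈ Ioc (0 : ℝ) 1, w t ≠ 0) (hr : r ∈ Ioo (0 : ℝ) 1) :
    HasDerivAt (radialIntegral a w) (-(a / (r ^ (a + 1) * w r))) r := by
  have hcont := (continuousOn_one_div_rpow_mul (a := a) hwc hw0).mono Ioo_subset_Ioc_self
  have hint := intervalIntegral.integral_hasDerivAt_left
    (intervalIntegrable_one_div_rpow_mul (a := a) hwc hw0 (Ioo_subset_Ioc_self hr))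
    (hcont.stronglyMeasurableAtFilter isOpen_Ioo r hr)
    (hcont.continuousAt (isOpen_Ioo.mem_nhds hr))
  convert! (hint.const_mul a).const_add 1 using 1
  ring

theorem integral_one_div_rpow_add_one (ha : a ≠ 0) (hr : 0 < r) :
    a * ∫ t in r..(1 : ℝ), 1 / t ^ (a + 1) = r ^ (-a) - 1 := by
  have hzero : (0 : ℝ) ∉ uIcc r 1 := notMem_uIcc_of_lt hr zero_lt_one
  have hcongr : ∫ t in r..(1 : ℝ), 1 / t ^ (a + 1) = ∫ t in r..(1 : ℝ), t ^ (-(a + 1)) :=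
    intervalIntegral.integral_congr fun t ht => by
      have ht0 : 0 < t := (lt_min hr zero_lt_one).trans_le ht.1
      simp only [Real.rpow_neg ht0.le, one_div]
  rw [hcongr, integral_rpow (Or.inr ⟨fun h => ha (by linarith), hzero⟩),
    show -(a + 1) + 1 = -a by ring, Real.one_rpow]
  field_simp
  ring

theorem rpow_neg_le_mul_radialIntegral (ha : 0 < a) (hw : IsRadialWeight w)
    (hr : r ∈ Ioc (0 : ℝ) 1) :
    r ^ (-a) ≤ w r * radialIntegral a w r := by
  have hwr : 1 ≤ w r := hw.one_le hr
  have hint : ∫ t in r..(1 : ℝ), 1 / t ^ (a + 1) ≤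
      w r * ∫ t in r..(1 : ℝ), 1 / (t ^ (a + 1) * w t) := by
    rw [← intervalIntegral.integral_const_mul]
    refine intervalIntegral.integral_mono_on hr.2 ?_
      ((intervalIntegrable_one_div_rpow_mul hw.continuousOn
        (fun t ht => (hw.pos ht).ne') hr).const_mul _) fun t ht => ?_
    · simpa using intervalIntegrable_one_div_rpow_mul (a := a) (w := fun _ => 1)
        continuousOn_const (fun _ _ => one_ne_zero) hr
    · have ht' : t ∈ Ioc (0 : ℝ) 1 := ⟨hr.1.trans_le ht.1, ht.2⟩
      have hwt := hw.pos ht'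
      have ht0 := ht'.1
      rw [mul_one_div, div_le_div_iff₀ (by positivity) (by positivity), one_mul, mul_comm]
      gcongr
      exact hw.antitoneOn hr ht' ht.1
  calc r ^ (-a) = 1 + a * ∫ t in r..(1 : ℝ), 1 / t ^ (a + 1) := by
        rw [integral_one_div_rpow_add_one ha.ne' hr.1]
        ring
    _ ≤ w r + a * (w r * ∫ t in r..(1 : ℝ), 1 / (t ^ (a + 1) * w t)) := by gcongr
    _ = w r * radialIntegral a w r := by
        rw [radialIntegral]
        ring

theorem radialIntegral_pos (ha : 0 < a) (hw : IsRadialWeight w) (hr : r ∈ Ioc (0 : ℝ) 1) :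
    0 < radialIntegral a w r :=
  pos_of_mul_pos_right ((Real.rpow_pos_of_pos hr.1 _).trans_le
    (rpow_neg_le_mul_radialIntegral ha hw hr)) (hw.pos hr).le

theorem radialProfile_pos (ha : 0 < a) (hw : IsRadialWeight w) (hr : r ∈ Ioc (0 : ℝ) 1) :
    0 < radialProfile a w r :=
  Real.rpow_pos_of_pos (radialIntegral_pos ha hw hr) _

theorem radialProfile_rpow (ha : a ≠ 0) (hI : 0 ≤ radialIntegral a w r) :
    radialProfile a w r ^ a = (radialIntegral a w r)⁻¹ := by
  rw [radialProfile, ← Real.rpow_mul hI, neg_mul, one_div_mul_cancel ha, Real.rpow_neg_one]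

theorem radialProfile_div_rpow_le (ha : 0 < a) (hw : IsRadialWeight w) (hr : r ∈ Ioc (0 : ℝ) 1) :
    (radialProfile a w r / r) ^ a ≤ w r := by
  have hI := radialIntegral_pos ha hw hr
  calc (radialProfile a w r / r) ^ a = r ^ (-a) / radialIntegral a w r := by
        rw [Real.div_rpow (radialProfile_pos ha hw hr).le hr.1.le, radialProfile_rpow ha.ne' hI.le,
          Real.rpow_neg hr.1.le, div_eq_mul_inv, div_eq_mul_inv, mul_comm]
    _ ≤ w r := (div_le_iff₀ hI).2 (rpow_neg_le_mul_radialIntegral ha hw hr)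

theorem hasDerivAt_radialProfile (ha : 0 < a) (hw : IsRadialWeight w) (hr : r ∈ Ioo (0 : ℝ) 1) :
    HasDerivAt (radialProfile a w) ((radialProfile a w r / r) ^ (a + 1) / w r) r := by
  have hI := radialIntegral_pos ha hw (Ioo_subset_Ioc_self hr)
  have hG := radialProfile_pos ha hw (Ioo_subset_Ioc_self hr)
  convert! (hasDerivAt_radialIntegral hw.continuousOn (fun t ht => (hw.pos ht).ne')
    hr).rpow_const (p := -(1 / a)) (Or.inl hI.ne') using 1
  rw [Real.rpow_sub_one hI.ne', ← radialProfile, Real.div_rpow hG.le hr.1.le,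
    Real.rpow_add_one hG.ne', radialProfile_rpow ha.ne' hI.le]
  field_simp

end RadialProfile

theorem distortionKp_fderiv_radialMap_radialProfile {n : ℕ} (hn : 2 ≤ n) {p : ℝ} (hp : n < p)
    {w : ℝ → ℝ} (hw : IsRadialWeight w) {x : Eucl n} (hx0 : x ≠ 0) (hx : ‖x‖ < 1) :
    distortionKp p (fderiv ℝ (radialMap (radialProfile (p - n) w))) x =
      ENNReal.ofReal (w ‖x‖) := by
  have ha : 0 < p - n := sub_pos.2 hp
  have hr : ‖x‖ ∈ Ioo (0 : ℝ) 1 := ⟨norm_pos_iff.2 hx0, hx⟩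
  have hr' := Ioo_subset_Ioc_self hr
  have hwr : 0 < w ‖x‖ := hw.pos hr'
  set T := radialProfile (p - n) w ‖x‖ / ‖x‖ with hT_def
  have hT : 0 < T := div_pos (radialProfile_pos ha hw hr') hr.1
  have hle : T ^ (p - n + 1) / w ‖x‖ ≤ T := by
    rw [div_le_iff₀ hwr, Real.rpow_add_one hT.ne', mul_comm]
    gcongr
    exact radialProfile_div_rpow_le ha hw hr'
  rw [distortionKp_fderiv_radialMap hn hx0 (hasDerivAt_radialProfile ha hw hr)
    (by positivity) hle, ← hT_def, div_div_cancel₀ (by positivity)]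

section LogWeight

variable {β : ℝ}

theorem log_exp_one_div_pos {t : ℝ} (ht : t ∈ Ioc (0 : ℝ) 1) : 0 < Real.log (Real.exp 1 / t) :=
  Real.log_pos <| (one_lt_div ht.1).2 (ht.2.trans_lt (Real.one_lt_exp_iff.2 one_pos))

theorem continuousOn_log_exp_one_div_rpow :
    ContinuousOn (fun t => Real.log (Real.exp 1 / t) ^ β) (Ioc 0 1) := by
  have hdiv : ContinuousOn (fun t => Real.exp 1 / t) (Ioc 0 1) :=
    continuousOn_const.div continuousOn_id fun t ht => ht.1.ne'
  exact (hdiv.log fun t ht => (div_pos (Real.exp_pos 1) ht.1).ne').rpow_const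
    fun t ht => Or.inl (log_exp_one_div_pos ht).ne'

theorem antitoneOn_log_exp_one_div_rpow (hβ : 0 ≤ β) :
    AntitoneOn (fun t => Real.log (Real.exp 1 / t) ^ β) (Ioc 0 1) := by
  intro s hs t ht hst
  refine Real.rpow_le_rpow (log_exp_one_div_pos ht).le ?_ hβ
  have hs0 := hs.1
  have ht0 := ht.1
  gcongr

theorem isRadialWeight_log_exp_one_div_rpow (hβ : 0 ≤ β) :
    IsRadialWeight fun t => Real.log (Real.exp 1 / t) ^ β where
  continuousOn := continuousOn_log_exp_one_div_rpow
  antitoneOn := antitoneOn_log_exp_one_div_rpow hβ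
  one_le_one := by simp

end LogWeight

theorem fmap_eq_radialMap (n : ℕ) (p : ℝ) :
    fmap n p = radialMap (radialProfile (p - n)
      fun t => Real.log (Real.exp 1 / t) ^ ((p - n + 1) / ((n : ℝ) - 1))) := by
  funext x
  rcases eq_or_ne x 0 with rfl | hx
  · simp [fmap, radialMap]
  · exact if_neg hx

theorem stmt_14_general (n : ℕ) (hn : 2 ≤ n) (p : ℝ) (hp : n < p)
    (x : Eucl n) (hx : x ∈ ball (0 : Eucl n) 1) (hx0 : x ≠ 0) :
    distortionKp p (fun y => fderiv ℝ (fmap n p) y) x =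
      ENNReal.ofReal (Real.log (Real.exp 1 / ‖x‖) ^ ((p - (n:ℝ) + 1) / ((n:ℝ) - 1))) := by
  have hn' : (2 : ℝ) ≤ n := by exact_mod_cast hn
  have hβ : 0 ≤ (p - n + 1) / ((n : ℝ) - 1) := div_nonneg (by linarith) (by linarith)
  rw [fmap_eq_radialMap]
  exact distortionKp_fderiv_radialMap_radialProfile hn hp
    (isRadialWeight_log_exp_one_div_rpow hβ) hx0 (mem_ball_zero_iff.1 hx)

/-- for the example radial mapping `f` of the unit ball, the distortion
satisfies `K_p(x,f) = (ln(e/|x|))^{(p-n+1)/(n-1)}` for every `x ∈ Bⁿ \ {0}`. -/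
theorem stmt_14 (n : ℕ) (hn : 3 ≤ n) (p : ℝ)
    (hp : p ∈ Ioo (n : ℝ) ((n : ℝ) + 1 / ((n : ℝ) - 2)))
    (x : Eucl n) (hx : x ∈ ball (0 : Eucl n) 1) (hx0 : x ≠ 0) :
    distortionKp p (fun y => fderiv ℝ (fmap n p) y) x =
      ENNReal.ofReal (Real.log (Real.exp 1 / ‖x‖) ^ ((p - (n:ℝ) + 1) / ((n:ℝ) - 1))) := by
  exact stmt_14_general n (by omega) p hp.1 x hx hx0
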